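/- Let n, k be natural numbers, let f be a k-regulous function on ℝⁿ, and let U = D(f) = {x : f(x) ≠ 0}. Let R^k(U) denote the ring of functions g : U → ℝ that are k-regulous on U, and let ρ : R^k(ℝⁿ) → R^k(U) be the ring homomorphism given by restriction. Then ρ identifies R^k(U) with the localization of R^k(ℝⁿ) away from f: ρ(f) is a unit, every element of R^k(U) can be written as ρ(g)·ρ(f)^{-N} for some g ∈ R^k(ℝⁿ) and N ∈ ℕ, and for g ∈ R^k(ℝⁿ), ρ(g) = 0 if and only if f·g = 0 in R^k(ℝⁿ). Equivalently, the induced map from the localization R^k(ℝⁿ)_f to R^k(U) is a ring isomorphism. -/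

import Mathlib

open MvPolynomial

/-- A function `f : ℝⁿ → ℝ` is `k`-regulous if it is of class `C^k` on all of `ℝⁿ` and
agrees with a rational function: there are polynomials `p`, `q` with `q ≠ 0` and
`q(x) * f(x) = p(x)` for every `x`. -/
def IsRegulous (n k : ℕ) (f : (Fin n → ℝ) → ℝ) : Prop :=
  ContDiff ℝ k f ∧ ∃ p q : MvPolynomial (Fin n) ℝ, q ≠ 0 ∧
    ∀ x : Fin n → ℝ, eval x q * f x = eval x p

/-- The ring `R^k(ℝⁿ)` of `k`-regulous functions, as a subring of the ring of all
functions `ℝⁿ → ℝ` with pointwise operations. -/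
def regulousRing (n k : ℕ) : Subring ((Fin n → ℝ) → ℝ) where
  carrier := {f | IsRegulous n k f}
  one_mem' := ⟨contDiff_const, 1, 1, one_ne_zero, by simp⟩
  zero_mem' := ⟨contDiff_const, 0, 1, one_ne_zero, by simp⟩
  mul_mem' := by
    rintro f g ⟨hf, p₁, q₁, hq₁, h₁⟩ ⟨hg, p₂, q₂, hq₂, h₂⟩
    refine ⟨hf.mul hg, p₁ * p₂, q₁ * q₂, mul_ne_zero hq₁ hq₂, fun x => ?_⟩
    simp only [eval_mul, Pi.mul_apply]
    linear_combination (eval x q₂ * g x) * h₁ x + eval x p₁ * h₂ x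
  add_mem' := by
    rintro f g ⟨hf, p₁, q₁, hq₁, h₁⟩ ⟨hg, p₂, q₂, hq₂, h₂⟩
    refine ⟨hf.add hg, p₁ * q₂ + p₂ * q₁, q₁ * q₂, mul_ne_zero hq₁ hq₂, fun x => ?_⟩
    simp only [eval_mul, eval_add, Pi.add_apply]
    linear_combination (eval x q₂) * h₁ x + (eval x q₁) * h₂ x
  neg_mem' := by
    rintro f ⟨hf, p, q, hq, h⟩
    refine ⟨hf.neg, -p, q, hq, fun x => ?_⟩
    simp only [map_neg, Pi.neg_apply]
    linear_combination -(h x)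

/-- A function `g : U → ℝ` defined on an open subset `U ⊆ ℝⁿ` is `k`-regulous on `U` if it
is of class `C^k` on `U` and agrees on `U` with a rational function `p/q`. -/
def IsRegulousOn (n k : ℕ) (U : Set (Fin n → ℝ)) (g : U → ℝ) : Prop :=
  ContDiffOn ℝ k (Function.extend Subtype.val g 0) U ∧
  ∃ p q : MvPolynomial (Fin n) ℝ, q ≠ 0 ∧
    ∀ x : U, eval (x : Fin n → ℝ) q * g x = eval (x : Fin n → ℝ) p

/-!
The unit and the kernel are elementary; what has to be shown is that, for `g` regulous on `D(f)`,
some `f ^ N * g`, extended by zero, is of class `C^k` on `ℝⁿ`.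

A real root of a polynomial is determined by the signs of the derivatives (its Thom code), so the
sign conditions realised by a polynomial system depend only on the signs of finitely many
polynomials in the coefficients (Tarski). Apply this to the system `|y|² < u`, `|u * f y| > 1`,
`|g y| > w` with parameters `u` and `w`: for large `u`, its solvability is the same for all
`w ≥ u ^ N`. As `|g|` is bounded on the compact set `{|y|² ≤ u, |u * f y| ≥ 1}`, there is no
solution with `w = u ^ N`; this is Łojasiewicz's inequality, and `u = 2 / |f y|` shows that
`f ^ N * g` is bounded near the zeros of `f`. The derivatives of `f` and `g` are again rational, so
induction on `k` upgrades boundedness to class `C^k`.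
-/

section

open Set Filter Topology
open SignType (sign)
open Polynomial (derivative)
open scoped Polynomial

/-- The Thom encoding of a real number `x` with respect to `p`: the signs at `x` of `p` and of all
its derivatives. -/
noncomputable def thomCode (p : ℝ[X]) (x : ℝ) (i : ℕ) : SignType :=
  sign ((derivative^[i] p).eval x)

lemma thomCode_derivative_eq {p q : ℝ[X]} {x y : ℝ} (h : thomCode p x = thomCode q y) :
    thomCode (derivative p) x = thomCode (derivative q) y :=
  funext fun i => congrFun h (i + 1)

lemma monotoneOn_eval_of_sign_derivative {p : ℝ[X]} {s : Set ℝ} (hs : Convex ℝ s) {c : ℝ}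
    (hc : 0 ≤ c) (h : ∀ z ∈ s, sign ((derivative p).eval z) = sign c) :
    MonotoneOn (fun z => p.eval z) s := by
  refine monotoneOn_of_deriv_nonneg hs p.continuous.continuousOn p.differentiable.differentiableOn
    fun z hz => ?_
  rw [Polynomial.deriv, ← sign_nonneg_iff, h z (interior_subset hz), sign_nonneg_iff]
  exact hc

lemma antitoneOn_eval_of_sign_derivative {p : ℝ[X]} {s : Set ℝ} (hs : Convex ℝ s) {c : ℝ}
    (hc : c ≤ 0) (h : ∀ z ∈ s, sign ((derivative p).eval z) = sign c) :
    AntitoneOn (fun z => p.eval z) s := by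
  refine antitoneOn_of_deriv_nonpos hs p.continuous.continuousOn p.differentiable.differentiableOn
    fun z hz => ?_
  rw [Polynomial.deriv, ← sign_nonpos_iff, h z (interior_subset hz), sign_nonpos_iff]
  exact hc

/-- **Thom's lemma**. -/
lemma sign_eval_eq_of_thomCode_eq {p : ℝ[X]} {a b z : ℝ} (h : thomCode p a = thomCode p b)
    (hz : z ∈ uIcc a b) : sign (p.eval z) = sign (p.eval a) := by
  obtain ⟨d, hd⟩ : ∃ d, p.natDegree ≤ d := ⟨_, le_rfl⟩
  induction d generalizing p z with
  | zero =>
    rw [Polynomial.eq_C_of_natDegree_le_zero hd, Polynomial.eval_C, Polynomial.eval_C]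
  | succ d ih =>
    have hsign : ∀ z ∈ uIcc a b, sign ((derivative p).eval z) = sign ((derivative p).eval a) :=
      fun z hz => ih (thomCode_derivative_eq h) hz
        ((Polynomial.natDegree_derivative_le p).trans (by lia))
    have hab : sign (p.eval a) = sign (p.eval b) := congrFun h 0
    have hbetween : p.eval z ∈ uIcc (p.eval a) (p.eval b) := by
      rcases le_total 0 ((derivative p).eval a) with hpos | hneg
      · exact (monotoneOn_eval_of_sign_derivative (convex_uIcc a b) hpos hsign).mapsTo_uIcc hz
      · exact (antitoneOn_eval_of_sign_derivative (convex_uIcc a b) hneg hsign).mapsTo_uIcc hz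
    have hmem := (sign : ℝ →o SignType).monotone.mapsTo_uIcc hbetween
    rwa [← hab, uIcc_self] at hmem

-- By Thom's lemma `p` and `q` are monotone, in the same direction, between the two points.
lemma lt_of_thomCode_derivative_eq {p q : ℝ[X]} {x x' y y' : ℝ}
    (hx : thomCode (derivative p) x = thomCode (derivative p) x')
    (hy : thomCode (derivative q) y = thomCode (derivative q) y')
    (hxy : sign ((derivative p).eval x) = sign ((derivative q).eval y))
    (h : sign (p.eval x) = sign (q.eval y)) (h' : sign (p.eval x') = sign (q.eval y'))
    (hne : sign (p.eval x) ≠ sign (p.eval x')) (hlt : x < x') : y < y' := by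
  have hp z (hz : z ∈ uIcc x x') := sign_eval_eq_of_thomCode_eq hx hz
  have hq z (hz : z ∈ uIcc y y') := (sign_eval_eq_of_thomCode_eq hy hz).trans hxy.symm
  by_contra! hle
  rcases le_total 0 ((derivative p).eval x) with hpos | hneg
  · have h₁ := monotoneOn_eval_of_sign_derivative (convex_uIcc x x') hpos hp
      left_mem_uIcc right_mem_uIcc hlt.le
    have h₂ := monotoneOn_eval_of_sign_derivative (convex_uIcc y y') hpos hq
      right_mem_uIcc left_mem_uIcc hle
    refine hne (le_antisymm (sign.monotone h₁) ?_)
    rw [h, h']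
    exact sign.monotone h₂
  · have h₁ := antitoneOn_eval_of_sign_derivative (convex_uIcc x x') hneg hp
      left_mem_uIcc right_mem_uIcc hlt.le
    have h₂ := antitoneOn_eval_of_sign_derivative (convex_uIcc y y') hneg hq
      right_mem_uIcc left_mem_uIcc hle
    refine hne (le_antisymm ?_ (sign.monotone h₁))
    rw [h, h']
    exact sign.monotone h₂

lemma lt_of_thomCode_eq {p q : ℝ[X]} {x x' y y' : ℝ} (h : thomCode p x = thomCode q y)
    (h' : thomCode p x' = thomCode q y') (hne : thomCode p x ≠ thomCode p x') (hlt : x < x') :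
    y < y' := by
  obtain ⟨d, hd⟩ : ∃ d, p.natDegree ≤ d := ⟨_, le_rfl⟩
  induction d generalizing p q with
  | zero =>
    refine absurd (funext fun i => ?_) hne
    rw [Polynomial.eq_C_of_natDegree_le_zero hd]
    cases i <;> simp [thomCode]
  | succ d ih =>
    have hder := thomCode_derivative_eq h
    have hder' := thomCode_derivative_eq h'
    by_cases hcode : thomCode (derivative p) x = thomCode (derivative p) x'
    · refine lt_of_thomCode_derivative_eq hcode (hder.symm.trans (hcode.trans hder'))
        (congrFun hder 0) (congrFun h 0) (congrFun h' 0) (fun hsign => hne (funext fun i => ?_)) hlt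
      cases i with
      | zero => exact hsign
      | succ i => exact congrFun hcode i
    · exact ih hder hder' hcode ((Polynomial.natDegree_derivative_le p).trans (by lia))

/-- The signs of the real numbers `χ b`, for `b` in the finite family `S`. -/
noncomputable def signVec {B : Type*} (S : Finset B) (χ : B → ℝ) (b : S) : SignType :=
  sign (χ b)

lemma signVec_eq_iff {B : Type*} {S : Finset B} {χ χ' : B → ℝ} :
    signVec S χ = signVec S χ' ↔ ∀ b ∈ S, sign (χ b) = sign (χ' b) :=
  funext_iff.trans Subtype.forall

lemma signVec_insert_eq_iff {B : Type*} [DecidableEq B] {S : Finset B} {b : B} {χ χ' : B → ℝ} :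
    signVec (insert b S) χ = signVec (insert b S) χ' ↔
      sign (χ b) = sign (χ' b) ∧ signVec S χ = signVec S χ' := by
  simp only [signVec_eq_iff, Finset.forall_mem_insert]

section SignVectors

variable {A : Type*} [CommRing A] {φ ψ : A →+* ℝ} {S : Finset A[X]}

/-- The signs at `x ∈ ℝ` of the polynomials in `S`, specialised to real polynomials along `φ`. -/
noncomputable def signVecAt (φ : A →+* ℝ) (S : Finset A[X]) (x : ℝ) : S → SignType :=
  signVec S fun P => (P.map φ).eval x

lemma thomCode_eq_of_signVecAt_eq (hS : ∀ P ∈ S, derivative P ∈ S) {x y : ℝ}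
    (h : signVecAt φ S x = signVecAt ψ S y) {P : A[X]} (hP : P ∈ S) :
    thomCode (P.map φ) x = thomCode (P.map ψ) y := by
  have hiter : ∀ i, derivative^[i] P ∈ S := fun i => by
    induction i with
    | zero => exact hP
    | succ i ih => rw [Function.iterate_succ_apply']; exact hS _ ih
  funext i
  simpa only [thomCode, Polynomial.iterate_derivative_map]
    using signVec_eq_iff.mp h _ (hiter i)

lemma signVecAt_eq_of_mem_uIcc (hS : ∀ P ∈ S, derivative P ∈ S) {a b z : ℝ}
    (h : signVecAt φ S a = signVecAt φ S b) (hz : z ∈ uIcc a b) :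
    signVecAt φ S z = signVecAt φ S a :=
  signVec_eq_iff.mpr fun _ hP =>
    sign_eval_eq_of_thomCode_eq (thomCode_eq_of_signVecAt_eq hS h hP) hz

lemma convex_signVecAt_fiber (hS : ∀ P ∈ S, derivative P ∈ S) (c : S → SignType) :
    Convex ℝ (signVecAt φ S ⁻¹' {c}) :=
  (ordConnected_iff_uIcc_subset.mpr fun _ ha _ hb _ hz =>
    (signVecAt_eq_of_mem_uIcc hS (ha.trans hb.symm) hz).trans ha).convex

lemma lt_of_signVecAt_eq (hS : ∀ P ∈ S, derivative P ∈ S) {x x' y y' : ℝ}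
    (h : signVecAt φ S x = signVecAt ψ S y) (h' : signVecAt φ S x' = signVecAt ψ S y')
    (hne : signVecAt φ S x ≠ signVecAt φ S x') (hlt : x < x') : y < y' := by
  obtain ⟨P, hP, hsign⟩ :
      ∃ P ∈ S, sign ((P.map φ).eval x) ≠ sign ((P.map φ).eval x') := by
    by_contra! hall
    exact hne (signVec_eq_iff.mpr hall)
  exact lt_of_thomCode_eq (thomCode_eq_of_signVecAt_eq hS h hP)
    (thomCode_eq_of_signVecAt_eq hS h' hP) (fun hcode => hsign (congrFun hcode 0)) hlt

/-- `x` is a root of some polynomial of `S` which does not vanish identically after specialising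
its coefficients along `φ`. -/
def IsFamilyRoot (φ : A →+* ℝ) (S : Finset A[X]) (x : ℝ) : Prop :=
  ∃ P ∈ S, P.map φ ≠ 0 ∧ (P.map φ).eval x = 0

lemma IsFamilyRoot.eq_of_signVecAt_eq (hS : ∀ P ∈ S, derivative P ∈ S) {x x' : ℝ}
    (hx : IsFamilyRoot φ S x) (h : signVecAt φ S x = signVecAt φ S x') : x = x' := by
  obtain ⟨P, hPS, hP0, hPx⟩ := hx
  by_contra hne
  have hinf : (uIcc x x').Infinite := Icc_infinite (inf_lt_sup.mpr hne)
  refine hP0 (Polynomial.eq_zero_of_infinite_isRoot _ (hinf.mono fun z hz => ?_))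
  have hsign := signVec_eq_iff.mp (signVecAt_eq_of_mem_uIcc hS h hz) P hPS
  rwa [hPx, sign_zero, sign_eq_zero_iff] at hsign

lemma IsFamilyRoot.of_signVecAt_eq (hzero : ∀ P ∈ S, P.map ψ = 0 → P.map φ = 0) {x y : ℝ}
    (hx : IsFamilyRoot φ S x) (h : signVecAt φ S x = signVecAt ψ S y) : IsFamilyRoot ψ S y := by
  obtain ⟨P, hPS, hP0, hPx⟩ := hx
  have hsign := signVec_eq_iff.mp h P hPS
  rw [hPx, sign_zero, eq_comm, sign_eq_zero_iff] at hsign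
  exact ⟨P, hPS, fun h0 => hP0 (hzero P hPS h0), hsign⟩

lemma map_eq_zero_of_range_subset (h : range (signVecAt φ S) ⊆ range (signVecAt ψ S)) :
    ∀ P ∈ S, P.map ψ = 0 → P.map φ = 0 := fun P hP h0 => by
  refine Polynomial.funext fun x => ?_
  obtain ⟨y, hy⟩ := h (mem_range_self x)
  rw [Polynomial.eval_zero, ← sign_eq_zero_iff, ← signVec_eq_iff.mp hy P hP, h0,
    Polynomial.eval_zero, sign_zero]

lemma eventually_signVecAt_eq {x : ℝ} (hx : ¬ IsFamilyRoot φ S x) :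
    ∀ᶠ z in 𝓝 x, signVecAt φ S z = signVecAt φ S x := by
  simp only [signVecAt, signVec_eq_iff]
  refine (eventually_all_finset S).mpr fun P hP => ?_
  by_cases hP0 : P.map φ = 0
  · simp [hP0]
  · have hPx : (P.map φ).eval x ≠ 0 := fun h => hx ⟨P, hP, hP0, h⟩
    have hsign : ContinuousAt (fun z => sign ((P.map φ).eval z)) x :=
      ContinuousAt.comp' (continuousAt_sign_of_ne_zero hPx) (P.map φ).continuousAt
    exact hsign.eventually_mem (IsOpen.mem_nhds (isOpen_discrete {_}) rfl)

lemma isOpen_signVecAt_fiber {x : ℝ} (hx : ¬ IsFamilyRoot φ S x) :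
    IsOpen (signVecAt φ S ⁻¹' {signVecAt φ S x}) := by
  refine isOpen_iff_mem_nhds.mpr fun z hz => ?_
  have hz' : ¬ IsFamilyRoot φ S z := fun h => hx (h.of_signVecAt_eq (fun _ _ => id) hz)
  filter_upwards [eventually_signVecAt_eq hz'] with t ht using ht.trans hz

end SignVectors

section OrderPatterns

variable {α β γ : Type*} [LinearOrder α] [LinearOrder β] {F : α → γ} {G : β → γ}

/-- `F` and `G` take the same values, and points where `F` takes two different values are ordered
as the points where `G` takes these two values. -/
structure SameOrderPattern (F : α → γ) (G : β → γ) : Prop where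
  range_eq : range F = range G
  lt_of_lt : ∀ {x x' y y'}, F x = G y → F x' = G y' → F x ≠ F x' → x < x' → y < y'

namespace SameOrderPattern

lemma lt_iff (h : SameOrderPattern F G) {x x' : α} {y y' : β} (hxy : F x = G y)
    (hxy' : F x' = G y') (hne : F x ≠ F x') : x < x' ↔ y < y' := by
  refine ⟨h.lt_of_lt hxy hxy' hne, fun hlt => ?_⟩
  by_contra! hle
  have hlt' : x' < x := hle.lt_of_ne fun heq => hne (congrArg F heq.symm)
  exact hlt.asymm (h.lt_of_lt hxy' hxy hne.symm hlt')

lemma isLUB_fiber (h : SameOrderPattern F G) {c : γ} {a : α} {b : β} (hab : F a = G b)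
    (ha : ∀ t, F t = F a → t = a) (hc : F a ≠ c) (hmax : ∀ t, ¬ IsGreatest (F ⁻¹' {c}) t)
    (hb : IsLUB (G ⁻¹' {c}) b) : IsLUB (F ⁻¹' {c}) a := by
  refine ⟨fun x hx => ?_, fun t ht => ?_⟩
  · obtain ⟨y, hy⟩ : F x ∈ range G := h.range_eq ▸ mem_range_self x
    have hyb : y < b := (hb.1 (hy.trans hx)).lt_of_ne fun heq => hc (by rw [hab, ← heq, hy, hx])
    exact ((h.lt_iff hy.symm hab (by rw [hx]; exact hc.symm)).mpr hyb).le
  · by_contra! hta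
    obtain ⟨y, hy⟩ : F t ∈ range G := h.range_eq ▸ mem_range_self t
    have hyb : y < b := (h.lt_iff hy.symm hab fun heq => hta.ne (ha t heq)).mp hta
    obtain ⟨y', hy', hyy'⟩ := (lt_isLUB_iff hb).mp hyb
    obtain ⟨x', hx'⟩ : G y' ∈ range F := h.range_eq ▸ mem_range_self y'
    by_cases htc : F t = c
    · exact hmax t ⟨htc, ht⟩
    · exact (ht (hx'.trans hy')).not_gt <|
        (h.lt_iff hy.symm hx' (by rw [hx', hy']; exact htc)).mpr hyy'

lemma dual (h : SameOrderPattern F G) :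
    SameOrderPattern (F ∘ OrderDual.ofDual) (G ∘ OrderDual.ofDual) where
  range_eq := by simpa only [EquivLike.range_comp] using h.range_eq
  lt_of_lt hxy hxy' hne := h.lt_of_lt hxy' hxy hne.symm

lemma isGLB_fiber (h : SameOrderPattern F G) {c : γ} {a : α} {b : β} (hab : F a = G b)
    (ha : ∀ t, F t = F a → t = a) (hc : F a ≠ c) (hmin : ∀ t, ¬ IsLeast (F ⁻¹' {c}) t)
    (hb : IsGLB (G ⁻¹' {c}) b) : IsGLB (F ⁻¹' {c}) a :=
  h.dual.isLUB_fiber (a := OrderDual.toDual a) (b := OrderDual.toDual b) hab ha hc hmin hb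

end SameOrderPattern

end OrderPatterns

lemma exists_gt_mem_of_isOpen {α : Type*} [TopologicalSpace α] [LinearOrder α] [OrderTopology α]
    [DenselyOrdered α] [NoMaxOrder α] {s : Set α} (hs : IsOpen s) {a : α} (ha : a ∈ s) :
    ∃ b ∈ s, a < b :=
  ((eventually_nhdsWithin_of_eventually_nhds (hs.eventually_mem ha)).and
    (eventually_mem_nhdsWithin (s := Ioi a))).exists

lemma exists_lt_mem_of_isOpen {α : Type*} [TopologicalSpace α] [LinearOrder α] [OrderTopology α]
    [DenselyOrdered α] [NoMinOrder α] {s : Set α} (hs : IsOpen s) {a : α} (ha : a ∈ s) :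
    ∃ b ∈ s, b < a :=
  exists_gt_mem_of_isOpen (α := αᵒᵈ) hs ha

lemma not_isGreatest_of_isOpen {α : Type*} [TopologicalSpace α] [LinearOrder α] [OrderTopology α]
    [DenselyOrdered α] [NoMaxOrder α] {s : Set α} (hs : IsOpen s) (a : α) : ¬ IsGreatest s a :=
  fun h => by
    obtain ⟨b, hb, hab⟩ := exists_gt_mem_of_isOpen hs h.1
    exact (h.2 hb).not_gt hab

lemma not_isLeast_of_isOpen {α : Type*} [TopologicalSpace α] [LinearOrder α] [OrderTopology α]
    [DenselyOrdered α] [NoMinOrder α] {s : Set α} (hs : IsOpen s) (a : α) : ¬ IsLeast s a :=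
  not_isGreatest_of_isOpen (α := αᵒᵈ) hs a

section IncreasingPolynomial

lemma exists_eval_pos_of_derivative_pos {p : ℝ[X]} {a : ℝ}
    (h : ∀ z ∈ Ici a, 0 < (derivative p).eval z) : ∃ z ∈ Ici a, 0 < p.eval z := by
  have hdeg : 0 < p.degree := by
    by_contra! hle
    have ha := h a self_mem_Ici
    rw [Polynomial.eq_C_of_degree_le_zero hle, Polynomial.derivative_C, Polynomial.eval_zero] at ha
    exact ha.false
  have hmono : MonotoneOn (fun z => p.eval z) (Ici a) :=
    monotoneOn_eval_of_sign_derivative (convex_Ici a) zero_le_one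
      fun z hz => by rw [sign_pos (h z hz), sign_one]
  rcases le_total 0 p.leadingCoeff with hlc | hlc
  · obtain ⟨z, hpos, hz⟩ := (((p.tendsto_atTop_of_leadingCoeff_nonneg hdeg hlc).eventually_gt_atTop
      0).and (eventually_ge_atTop a)).exists
    exact ⟨z, hz, hpos⟩
  · obtain ⟨z, hlt, hz⟩ := (((p.tendsto_atBot_of_leadingCoeff_nonpos hdeg hlc).eventually_lt_atBot
      (p.eval a)).and (eventually_ge_atTop a)).exists
    exact absurd (hmono self_mem_Ici hz hz) hlt.not_ge

variable {p : ℝ[X]} {C : Set ℝ}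

lemma strictMonoOn_eval_of_derivative_pos (hC : Convex ℝ C)
    (hp : ∀ z ∈ C, 0 < (derivative p).eval z) : StrictMonoOn (fun z => p.eval z) C :=
  strictMonoOn_of_deriv_pos hC p.continuousOn fun z hz => by
    rw [Polynomial.deriv]
    exact hp z (interior_subset hz)

lemma exists_eval_pos_iff (hC : Convex ℝ C) (hne : C.Nonempty)
    (hp : ∀ z ∈ C, 0 < (derivative p).eval z) :
    (∃ x ∈ C, 0 < p.eval x) ↔ ∀ b, IsLUB C b → 0 < p.eval b := by
  constructor
  · rintro ⟨x, hx, hpos⟩ b hb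
    have hsub : Ioo x b ⊆ C := fun z hz => by
      obtain ⟨t, ht, hzt⟩ := (lt_isLUB_iff hb).mp hz.2
      exact hC.ordConnected.out hx ht ⟨hz.1.le, hzt.le⟩
    have hmono : MonotoneOn (fun z => p.eval z) (Icc x b) :=
      monotoneOn_of_deriv_nonneg (convex_Icc x b) p.continuousOn p.differentiableOn fun z hz => by
        rw [interior_Icc] at hz
        rw [Polynomial.deriv]
        exact (hp z (hsub hz)).le
    exact hpos.trans_le (hmono (left_mem_Icc.mpr (hb.1 hx)) (right_mem_Icc.mpr (hb.1 hx)) (hb.1 hx))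
  · intro h
    by_cases hbdd : BddAbove C
    · have hsup := isLUB_csSup hne hbdd
      obtain ⟨x, hpos, hx⟩ := mem_closure_iff.mp (hsup.mem_closure hne) _
        (isOpen_lt continuous_const p.continuous) (h _ hsup)
      exact ⟨x, hx, hpos⟩
    · obtain ⟨x₀, hx₀⟩ := hne
      have hIci : Ici x₀ ⊆ C := fun z hz => by
        obtain ⟨t, ht, hzt⟩ := not_bddAbove_iff.mp hbdd z
        exact hC.ordConnected.out hx₀ ht ⟨hz, hzt.le⟩
      obtain ⟨z, hz, hpos⟩ := exists_eval_pos_of_derivative_pos fun z hz => hp z (hIci hz)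
      exact ⟨z, hIci hz, hpos⟩

lemma exists_eval_neg_iff (hC : Convex ℝ C) (hne : C.Nonempty)
    (hp : ∀ z ∈ C, 0 < (derivative p).eval z) :
    (∃ x ∈ C, p.eval x < 0) ↔ ∀ a, IsGLB C a → p.eval a < 0 := by
  have hreflect := exists_eval_pos_iff (p := -p.comp (-Polynomial.X)) hC.neg
    (Set.nonempty_neg.mpr hne)
    (fun z hz => by simpa [Polynomial.derivative_comp] using hp (-z) hz)
  rw [neg_surjective.forall] at hreflect
  simpa using hreflect

lemma exists_eval_pos_and_exists_eval_neg (ho : IsOpen C) (hC : Convex ℝ C)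
    (hp : ∀ z ∈ C, 0 < (derivative p).eval z) {x : ℝ} (hx : x ∈ C) (h0 : p.eval x = 0) :
    (∃ y ∈ C, 0 < p.eval y) ∧ ∃ z ∈ C, p.eval z < 0 := by
  have hmono := strictMonoOn_eval_of_derivative_pos hC hp
  obtain ⟨y, hy, hxy⟩ := exists_gt_mem_of_isOpen ho hx
  obtain ⟨z, hz, hzx⟩ := exists_lt_mem_of_isOpen ho hx
  exact ⟨⟨y, hy, h0 ▸ hmono hx hy hxy⟩, z, hz, h0 ▸ hmono hz hx hzx⟩

end IncreasingPolynomial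

lemma exists_sign_eval_eq_of_derivative_pos {p q : ℝ[X]} {C D : Set ℝ} (hCo : IsOpen C)
    (hC : Convex ℝ C) (hp : ∀ z ∈ C, 0 < (derivative p).eval z) (hD : Convex ℝ D)
    (hDne : D.Nonempty) (hq : ∀ z ∈ D, 0 < (derivative q).eval z)
    (hLUB : ∀ b, IsLUB D b → ∃ a, IsLUB C a ∧ sign (p.eval a) = sign (q.eval b))
    (hGLB : ∀ b, IsGLB D b → ∃ a, IsGLB C a ∧ sign (p.eval a) = sign (q.eval b))
    {x : ℝ} (hx : x ∈ C) : ∃ y ∈ D, sign (p.eval x) = sign (q.eval y) := by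
  have hpos (h : ∃ x ∈ C, 0 < p.eval x) : ∃ y ∈ D, 0 < q.eval y := by
    refine (exists_eval_pos_iff hD hDne hq).mpr fun b hb => ?_
    obtain ⟨a, ha, hab⟩ := hLUB b hb
    rw [← sign_eq_one_iff, ← hab, sign_eq_one_iff]
    exact (exists_eval_pos_iff hC ⟨x, hx⟩ hp).mp h a ha
  have hneg (h : ∃ x ∈ C, p.eval x < 0) : ∃ y ∈ D, q.eval y < 0 := by
    refine (exists_eval_neg_iff hD hDne hq).mpr fun b hb => ?_
    obtain ⟨a, ha, hab⟩ := hGLB b hb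
    rw [← sign_eq_neg_one_iff, ← hab, sign_eq_neg_one_iff]
    exact (exists_eval_neg_iff hC ⟨x, hx⟩ hp).mp h a ha
  rcases lt_trichotomy (p.eval x) 0 with hlt | heq | hgt
  · obtain ⟨y, hy, hlt'⟩ := hneg ⟨x, hx, hlt⟩
    exact ⟨y, hy, by rw [sign_neg hlt, sign_neg hlt']⟩
  · obtain ⟨hxpos, hxneg⟩ := exists_eval_pos_and_exists_eval_neg hCo hC hp hx heq
    obtain ⟨⟨y, hy, hy0⟩, z, hz, hz0⟩ := And.intro (hpos hxpos) (hneg hxneg)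
    obtain ⟨w, hw, hw0 : q.eval w = 0⟩ :=
      hD.isPreconnected.intermediate_value hz hy q.continuousOn ⟨hz0.le, hy0.le⟩
    exact ⟨w, hw, by rw [heq, hw0]⟩
  · obtain ⟨y, hy, hgt'⟩ := hpos ⟨x, hx, hgt⟩
    exact ⟨y, hy, by rw [sign_pos hgt, sign_pos hgt']⟩

lemma exists_sign_eval_eq {p q : ℝ[X]} {C D : Set ℝ} {σ : SignType} (hσ : σ ≠ 0) (hCo : IsOpen C)
    (hC : Convex ℝ C) (hp : ∀ z ∈ C, sign ((derivative p).eval z) = σ) (hD : Convex ℝ D)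
    (hDne : D.Nonempty) (hq : ∀ z ∈ D, sign ((derivative q).eval z) = σ)
    (hLUB : ∀ b, IsLUB D b → ∃ a, IsLUB C a ∧ sign (p.eval a) = sign (q.eval b))
    (hGLB : ∀ b, IsGLB D b → ∃ a, IsGLB C a ∧ sign (p.eval a) = sign (q.eval b))
    {x : ℝ} (hx : x ∈ C) : ∃ y ∈ D, sign (p.eval x) = sign (q.eval y) := by
  cases σ with
  | zero => exact absurd rfl hσ
  | pos =>
    exact exists_sign_eval_eq_of_derivative_pos hCo hC (fun z hz => sign_eq_one_iff.mp (hp z hz)) hD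
      hDne (fun z hz => sign_eq_one_iff.mp (hq z hz)) hLUB hGLB hx
  | neg =>
    have hp' z (hz : z ∈ C) : 0 < (derivative (-p)).eval z := by
      simpa using sign_eq_neg_one_iff.mp (hp z hz)
    have hq' z (hz : z ∈ D) : 0 < (derivative (-q)).eval z := by
      simpa using sign_eq_neg_one_iff.mp (hq z hz)
    simpa [Left.sign_neg] using exists_sign_eval_eq_of_derivative_pos hCo hC hp' hD hDne hq'
      (by simpa [Left.sign_neg] using hLUB) (by simpa [Left.sign_neg] using hGLB) hx

section SignVectors

variable {A : Type*} [CommRing A] {φ ψ : A →+* ℝ} {S : Finset A[X]}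

lemma sameOrderPattern_signVecAt (hS : ∀ P ∈ S, derivative P ∈ S)
    (hrange : range (signVecAt φ S) = range (signVecAt ψ S)) :
    SameOrderPattern (signVecAt φ S) (signVecAt ψ S) :=
  ⟨hrange, lt_of_signVecAt_eq hS⟩

lemma isFamilyRoot_of_mem_closure_fiber {c : S → SignType} {b : ℝ}
    (hb : b ∈ closure (signVecAt φ S ⁻¹' {c})) (hc : signVecAt φ S b ≠ c) :
    IsFamilyRoot φ S b := by
  by_contra hroot
  obtain ⟨z, hz, hzc⟩ := mem_closure_iff_nhds.mp hb _ (eventually_signVecAt_eq hroot)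
  exact hc (hz.symm.trans hzc)

lemma exists_isFamilyRoot_of_signVecAt_eq (hrange : range (signVecAt φ S) = range (signVecAt ψ S))
    {b : ℝ} (hb : IsFamilyRoot ψ S b) :
    ∃ a, IsFamilyRoot φ S a ∧ signVecAt φ S a = signVecAt ψ S b := by
  obtain ⟨a, hab⟩ : signVecAt ψ S b ∈ range (signVecAt φ S) := hrange ▸ mem_range_self b
  exact ⟨a, hb.of_signVecAt_eq (map_eq_zero_of_range_subset hrange.ge) hab.symm, hab⟩

lemma exists_isLUB_fiber (hS : ∀ P ∈ S, derivative P ∈ S)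
    (hrange : range (signVecAt φ S) = range (signVecAt ψ S)) {c : S → SignType}
    (hC : IsOpen (signVecAt φ S ⁻¹' {c})) (hD : IsOpen (signVecAt ψ S ⁻¹' {c})) {b : ℝ}
    (hb : IsLUB (signVecAt ψ S ⁻¹' {c}) b) :
    ∃ a, IsFamilyRoot φ S a ∧ signVecAt φ S a = signVecAt ψ S b ∧
      IsLUB (signVecAt φ S ⁻¹' {c}) a := by
  have hbc : signVecAt ψ S b ≠ c := fun h => not_isGreatest_of_isOpen hD b ⟨h, hb.1⟩
  obtain ⟨a, haroot, hab⟩ := exists_isFamilyRoot_of_signVecAt_eq hrange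
    (isFamilyRoot_of_mem_closure_fiber (hb.mem_closure hb.nonempty) hbc)
  exact ⟨a, haroot, hab, (sameOrderPattern_signVecAt hS hrange).isLUB_fiber hab
    (fun t ht => (haroot.eq_of_signVecAt_eq hS ht.symm).symm) (hab ▸ hbc)
    (not_isGreatest_of_isOpen hC) hb⟩

lemma exists_isGLB_fiber (hS : ∀ P ∈ S, derivative P ∈ S)
    (hrange : range (signVecAt φ S) = range (signVecAt ψ S)) {c : S → SignType}
    (hC : IsOpen (signVecAt φ S ⁻¹' {c})) (hD : IsOpen (signVecAt ψ S ⁻¹' {c})) {b : ℝ}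
    (hb : IsGLB (signVecAt ψ S ⁻¹' {c}) b) :
    ∃ a, IsFamilyRoot φ S a ∧ signVecAt φ S a = signVecAt ψ S b ∧
      IsGLB (signVecAt φ S ⁻¹' {c}) a := by
  have hbc : signVecAt ψ S b ≠ c := fun h => not_isLeast_of_isOpen hD b ⟨h, hb.1⟩
  obtain ⟨a, haroot, hab⟩ := exists_isFamilyRoot_of_signVecAt_eq hrange
    (isFamilyRoot_of_mem_closure_fiber (hb.mem_closure hb.nonempty) hbc)
  exact ⟨a, haroot, hab, (sameOrderPattern_signVecAt hS hrange).isGLB_fiber hab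
    (fun t ht => (haroot.eq_of_signVecAt_eq hS ht.symm).symm) (hab ▸ hbc)
    (not_isLeast_of_isOpen hC) hb⟩

-- Off the roots of `S`, a common sign vector `c` is that of a pair of open intervals on which the
-- two specialisations of `P` are strictly monotone in the same direction. The signs they take
-- there are determined by their signs at the endpoints, and the endpoints are roots of `S`.
lemma range_signVecAt_insert_subset [DecidableEq A[X]] (hS : ∀ P ∈ S, derivative P ∈ S)
    (hrange : range (signVecAt φ S) = range (signVecAt ψ S)) {P : A[X]}
    (hder : derivative P ∈ S) (hder0 : (derivative P).map φ ≠ 0)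
    (hroot : ∀ x y, IsFamilyRoot φ S x → signVecAt φ S x = signVecAt ψ S y →
      sign ((P.map φ).eval x) = sign ((P.map ψ).eval y)) :
    range (signVecAt φ (insert P S)) ⊆ range (signVecAt ψ (insert P S)) := by
  rintro _ ⟨x, rfl⟩
  obtain ⟨y₀, hy₀⟩ : signVecAt φ S x ∈ range (signVecAt ψ S) := hrange ▸ mem_range_self x
  suffices h : ∃ y ∈ signVecAt ψ S ⁻¹' {signVecAt φ S x},
      sign ((P.map φ).eval x) = sign ((P.map ψ).eval y) by
    obtain ⟨y, hy, hsign⟩ := h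
    exact ⟨y, signVec_insert_eq_iff.mpr ⟨hsign.symm, hy⟩⟩
  by_cases hx : IsFamilyRoot φ S x
  · exact ⟨y₀, hy₀, hroot x y₀ hx hy₀.symm⟩
  have hy₀root : ¬ IsFamilyRoot ψ S y₀ := fun h =>
    hx (h.of_signVecAt_eq (map_eq_zero_of_range_subset hrange.ge) hy₀)
  have hC := isOpen_signVecAt_fiber hx
  have hD := isOpen_signVecAt_fiber hy₀root
  rw [hy₀] at hD
  have hder_sign : sign ((derivative (P.map φ)).eval x) ≠ 0 := fun h =>
    hx ⟨_, hder, hder0, by rwa [Polynomial.derivative_map, sign_eq_zero_iff] at h⟩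
  refine exists_sign_eval_eq hder_sign hC (convex_signVecAt_fiber hS _) (fun z hz => ?_)
    (convex_signVecAt_fiber hS _) ⟨y₀, hy₀⟩ (fun z hz => ?_) (fun b hb => ?_) (fun b hb => ?_) rfl
  · simpa only [Polynomial.derivative_map] using signVec_eq_iff.mp hz _ hder
  · simpa only [Polynomial.derivative_map] using signVec_eq_iff.mp hz _ hder
  · obtain ⟨a, haroot, hab, ha⟩ := exists_isLUB_fiber hS hrange hC hD hb
    exact ⟨a, ha, hroot a b haroot hab⟩
  · obtain ⟨a, haroot, hab, ha⟩ := exists_isGLB_fiber hS hrange hC hD hb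
    exact ⟨a, ha, hroot a b haroot hab⟩

end SignVectors

lemma exists_finset_subset_closed {α : Type*} [Zero α] (rank : α → ℕ)
    (T : α → α → Finset α)
    (hT : ∀ a b, rank b ≤ rank a → ∀ c ∈ T a b, c = 0 ∨ rank c < rank b) (L : Finset α) :
    ∃ M : Finset α, L ⊆ M ∧ ∀ a ∈ M, ∀ b ∈ M, rank b ≤ rank a → T a b ⊆ M := by
  classical
  suffices h : ∀ (e : ℕ) (M : Finset α), 0 ∈ M →
      (∀ a ∈ M, ∀ b ∈ M, e ≤ rank b → rank b ≤ rank a → T a b ⊆ M) →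
      ∃ M' : Finset α, M ⊆ M' ∧ ∀ a ∈ M', ∀ b ∈ M', rank b ≤ rank a → T a b ⊆ M' by
    obtain ⟨M, hM, hclosed⟩ := h ((insert 0 L).sup rank + 1) (insert 0 L)
      (Finset.mem_insert_self 0 L) fun a _ b hb hlt _ =>
        absurd (Finset.le_sup (f := rank) hb) (by lia)
    exact ⟨M, (Finset.subset_insert 0 L).trans hM, hclosed⟩
  intro e
  induction e with
  | zero => exact fun M _ hM => ⟨M, subset_rfl, fun a ha b hb => hM a ha b hb (Nat.zero_le _)⟩
  | succ e ih =>
    intro M h0 hM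
    let pairs := (M ×ˢ M).filter fun x => rank x.2 = e ∧ e ≤ rank x.1
    have hnew : ∀ c ∈ M ∪ pairs.biUnion fun x => T x.1 x.2, e ≤ rank c → c ∈ M := by
      intro c hc hec
      rcases Finset.mem_union.mp hc with hcM | hcT
      · exact hcM
      obtain ⟨⟨a, b⟩, hab, hcab⟩ := Finset.mem_biUnion.mp hcT
      obtain ⟨-, rfl, hle⟩ := Finset.mem_filter.mp hab
      rcases hT a b hle c hcab with rfl | hlt
      · exact h0
      · exact absurd hec hlt.not_ge
    obtain ⟨M', hMM', hM'⟩ := ih (M ∪ pairs.biUnion fun x => T x.1 x.2)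
      (Finset.mem_union_left _ h0) fun a ha b hb heb hba => by
        have haM := hnew a ha (heb.trans hba)
        have hbM := hnew b hb heb
        rcases heb.eq_or_lt with rfl | hlt
        · exact (Finset.subset_biUnion_of_mem (fun x : α × α => T x.1 x.2) (Finset.mem_filter.mpr
            ⟨Finset.mk_mem_product haM hbM, rfl, hba⟩)).trans Finset.subset_union_right
        · exact (hM a haM b hbM hlt hba).trans Finset.subset_union_left
    exact ⟨M', Finset.subset_union_left.trans hMM', hM'⟩

section Elimination

variable {A : Type*} [CommRing A]

lemma exists_pseudoRem (P : A[X]) {Q : A[X]} (hQ : 0 < Q.natDegree) :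
    ∃ (R T : A[X]) (k : ℕ), R.natDegree < Q.natDegree ∧
      Polynomial.C (Q.leadingCoeff ^ k) * P = Q * T + R := by
  obtain ⟨d, hd⟩ : ∃ d, P.natDegree ≤ d := ⟨_, le_rfl⟩
  induction d generalizing P with
  | zero => exact ⟨P, 0, 0, by lia, by simp⟩
  | succ d ih =>
    rcases lt_or_ge P.natDegree Q.natDegree with hlt | hle
    · exact ⟨P, 0, 0, hlt, by simp⟩
    have hcancel := Polynomial.natDegree_cancelLeads_lt_of_natDegree_le_natDegree hle
      (hQ.trans_le hle)
    obtain ⟨R, T, k, hdeg, heq⟩ := ih (Q.cancelLeads P) (by lia)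
    rw [Polynomial.cancelLeads, Nat.sub_eq_zero_of_le hle, pow_zero, mul_one] at heq
    refine ⟨R, T + Polynomial.C (Q.leadingCoeff ^ k) * Polynomial.C P.leadingCoeff *
      Polynomial.X ^ (P.natDegree - Q.natDegree), k + 1, hdeg, ?_⟩
    rw [pow_succ, Polynomial.C_mul]
    linear_combination heq

/-- A finite family of polynomials closed under the operations used to eliminate the variable:
derivatives, truncation of the leading term, and pseudo-division. -/
structure IsElimClosed (M : Finset A[X]) : Prop where
  derivative_mem : ∀ P ∈ M, derivative P ∈ M
  eraseLead_mem : ∀ P ∈ M, P.eraseLead ∈ M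
  exists_pseudoRem_mem : ∀ P ∈ M, ∀ Q ∈ M, 0 < Q.natDegree → Q.natDegree ≤ P.natDegree →
    ∃ R ∈ M, R.natDegree < Q.natDegree ∧
      ∃ (T : A[X]) (k : ℕ), Polynomial.C (Q.leadingCoeff ^ k) * P = Q * T + R

lemma exists_isElimClosed (L : Finset A[X]) : ∃ M : Finset A[X], L ⊆ M ∧ IsElimClosed M := by
  classical
  choose! R T k hR using fun P Q : A[X] => exists_pseudoRem P (Q := Q)
  obtain ⟨M, hLM, hM⟩ := exists_finset_subset_closed Polynomial.natDegree
    (fun P Q => {derivative Q, Q.eraseLead, if 0 < Q.natDegree then R P Q else 0})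
    (fun P Q _ c hc => by
      simp only [Finset.mem_insert, Finset.mem_singleton] at hc
      rcases hc with rfl | rfl | rfl
      · rcases Q.natDegree.eq_zero_or_pos with hQ | hQ
        · exact .inl (Polynomial.derivative_of_natDegree_zero hQ)
        · exact .inr (Polynomial.natDegree_derivative_lt hQ.ne')
      · exact Q.eraseLead_natDegree_lt_or_eraseLead_eq_zero.symm
      · split_ifs with hQ
        · exact .inr (hR P Q hQ).1
        · exact .inl rfl) L
  refine ⟨M, hLM, fun P hP => hM P hP P hP le_rfl ?_, fun P hP => hM P hP P hP le_rfl ?_,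
    fun P hP Q hQ hpos hle => ⟨R P Q, hM P hP Q hQ hle ?_, (hR P Q hpos).1, _, _, (hR P Q hpos).2⟩⟩
  · simp
  · simp
  · simp [hpos]

variable {φ ψ : A →+* ℝ} {S : Finset A[X]} {P : A[X]}

lemma IsElimClosed.of_insert [DecidableEq A[X]] (h : IsElimClosed (insert P S))
    (hmax : ∀ Q ∈ S, Q.degree ≤ P.degree) : IsElimClosed S := by
  have hlower {R Q : A[X]} (hQ : Q ∈ S) (hR : R ∈ insert P S) (hlt : R.degree < Q.degree) :
      R ∈ S :=
    Finset.mem_of_mem_insert_of_ne hR fun heq => (hmax Q hQ).not_gt (heq ▸ hlt)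
  have hmem {Q : A[X]} (hQ : Q ∈ S) : Q ∈ insert P S := Finset.mem_insert_of_mem hQ
  refine ⟨fun Q hQ => ?_, fun Q hQ => ?_, fun Q₁ hQ₁ Q hQ hpos hle => ?_⟩
  · rcases eq_or_ne Q 0 with rfl | hQ0
    · rwa [Polynomial.derivative_zero]
    · exact hlower hQ (h.derivative_mem Q (hmem hQ)) (Polynomial.degree_derivative_lt hQ0)
  · rcases eq_or_ne Q 0 with rfl | hQ0
    · rwa [Polynomial.eraseLead_zero]
    · exact hlower hQ (h.eraseLead_mem Q (hmem hQ)) (Polynomial.degree_eraseLead_lt hQ0)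
  · obtain ⟨R, hR, hlt, hdiv⟩ := h.exists_pseudoRem_mem Q₁ (hmem hQ₁) Q (hmem hQ) hpos hle
    exact ⟨R, hlower hQ hR (Polynomial.degree_lt_degree hlt), hlt, hdiv⟩

lemma exists_map_eq_and_map_leadingCoeff_ne_zero (hS : ∀ P ∈ S, P.eraseLead ∈ S) (hP : P ∈ S)
    (hP0 : P.map φ ≠ 0) : ∃ Q ∈ S, Q.map φ = P.map φ ∧ φ Q.leadingCoeff ≠ 0 := by
  obtain ⟨d, hd⟩ : ∃ d, P.support.card ≤ d := ⟨_, le_rfl⟩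
  induction d generalizing P with
  | zero =>
    refine absurd ?_ hP0
    rw [Polynomial.card_support_eq_zero.mp (Nat.le_zero.mp hd), Polynomial.map_zero]
  | succ d ih =>
    by_cases hlc : φ P.leadingCoeff = 0
    · have hmap : P.eraseLead.map φ = P.map φ := by
        rw [← Polynomial.self_sub_C_mul_X_pow, Polynomial.map_sub, Polynomial.map_mul,
          Polynomial.map_C, hlc, Polynomial.C_0, zero_mul, sub_zero]
      have hPne : P ≠ 0 := by
        rintro rfl
        exact hP0 (Polynomial.map_zero φ)
      obtain ⟨Q, hQS, hQ, hQlc⟩ := ih (hS P hP) (hmap ▸ hP0)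
        (Nat.le_of_lt_succ ((Polynomial.eraseLead_support_card_lt hPne).trans_le hd))
      exact ⟨Q, hQS, hQ.trans hmap, hQlc⟩
    · exact ⟨P, hP, rfl, hlc⟩

lemma sign_eval_eq_of_isFamilyRoot [DecidableEq A[X]] (hM : IsElimClosed (insert P S))
    (hmax : ∀ Q ∈ S, Q.degree ≤ P.degree)
    (hcoeff : ∀ Q ∈ S, ∀ i, sign (φ (Q.coeff i)) = sign (ψ (Q.coeff i))) {x y : ℝ}
    (hx : IsFamilyRoot φ S x) (hxy : signVecAt φ S x = signVecAt ψ S y) :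
    sign ((P.map φ).eval x) = sign ((P.map ψ).eval y) := by
  obtain ⟨Q₀, hQ₀, hQ₀0, hQ₀x⟩ := hx
  obtain ⟨Q, hQ, hQmap, hlc⟩ := exists_map_eq_and_map_leadingCoeff_ne_zero
    (hM.of_insert hmax).eraseLead_mem hQ₀ hQ₀0
  have hQx : (Q.map φ).eval x = 0 := by rw [hQmap, hQ₀x]
  have hQy : (Q.map ψ).eval y = 0 := by
    rw [← sign_eq_zero_iff, ← signVec_eq_iff.mp hxy Q hQ, hQx, sign_zero]
  have hpos : 0 < Q.natDegree := by
    by_contra! hle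
    rw [Polynomial.eq_C_of_natDegree_le_zero hle, Polynomial.map_C, Polynomial.eval_C] at hQx
    rw [Polynomial.leadingCoeff, Nat.le_zero.mp hle] at hlc
    exact hlc hQx
  obtain ⟨R, hR, hlt, T, k, hdiv⟩ := hM.exists_pseudoRem_mem P (Finset.mem_insert_self P S) Q
    (Finset.mem_insert_of_mem hQ) hpos (Polynomial.natDegree_le_natDegree (hmax Q hQ))
  have hRS : R ∈ S := Finset.mem_of_mem_insert_of_ne hR fun heq =>
    (Polynomial.natDegree_le_natDegree (hmax Q hQ)).not_gt (heq ▸ hlt)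
  have hsign {χ : A →+* ℝ} {z : ℝ} (hz : (Q.map χ).eval z = 0) :
      sign (χ Q.leadingCoeff) ^ k * sign ((P.map χ).eval z) = sign ((R.map χ).eval z) := by
    have heval := congrArg (fun F => (Polynomial.map χ F).eval z) hdiv
    simp only [Polynomial.map_mul, Polynomial.map_C, Polynomial.map_add, Polynomial.eval_mul,
      Polynomial.eval_C, Polynomial.eval_add, hz, zero_mul, zero_add] at heval
    rw [← heval, sign_mul, map_pow, sign_pow]
  refine mul_left_cancel₀ (pow_ne_zero k (sign_ne_zero.mpr hlc)) ?_
  rw [hsign hQx, Polynomial.leadingCoeff, hcoeff Q hQ, ← Polynomial.leadingCoeff, hsign hQy]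
  exact signVec_eq_iff.mp hxy R hRS

lemma range_signVecAt_insert_subset_of_isElimClosed [DecidableEq A[X]]
    (hM : IsElimClosed (insert P S)) (hmax : ∀ Q ∈ S, Q.degree ≤ P.degree)
    (hcoeff : ∀ Q ∈ insert P S, ∀ i, sign (φ (Q.coeff i)) = sign (ψ (Q.coeff i)))
    (hrange : range (signVecAt φ S) = range (signVecAt ψ S)) :
    range (signVecAt φ (insert P S)) ⊆ range (signVecAt ψ (insert P S)) := by
  have hder := hM.derivative_mem P (Finset.mem_insert_self P S)
  by_cases hder0 : (derivative P).map φ = 0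
  · have hder0' : (derivative P).map ψ = 0 := by
      ext i
      rw [Polynomial.coeff_map, Polynomial.coeff_zero, ← sign_eq_zero_iff, ← hcoeff _ hder,
        ← Polynomial.coeff_map, hder0, Polynomial.coeff_zero, sign_zero]
    have hconst {χ : A →+* ℝ} (h : (derivative P).map χ = 0) (z : ℝ) :
        (P.map χ).eval z = χ (P.coeff 0) := by
      rw [← Polynomial.derivative_map, Polynomial.derivative_eq_zero] at h
      rw [Polynomial.eq_C_of_natDegree_eq_zero h, Polynomial.eval_C, Polynomial.coeff_map]
    rintro _ ⟨x, rfl⟩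
    obtain ⟨y, hy⟩ : signVecAt φ S x ∈ range (signVecAt ψ S) := hrange ▸ mem_range_self x
    refine ⟨y, signVec_insert_eq_iff.mpr ⟨?_, hy⟩⟩
    rw [hconst hder0', hconst hder0, hcoeff P (Finset.mem_insert_self P S)]
  · have hne : derivative P ≠ P := fun heq => by
      have hP0 : P ≠ 0 := fun h0 => hder0 (by rw [h0, map_zero, Polynomial.map_zero])
      exact (Polynomial.degree_derivative_lt hP0).ne (congrArg _ heq)
    exact range_signVecAt_insert_subset (hM.of_insert hmax).derivative_mem hrange
      (Finset.mem_of_mem_insert_of_ne hder hne) hder0 fun x y hx hxy =>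
        sign_eval_eq_of_isFamilyRoot hM hmax
          (fun Q hQ => hcoeff Q (Finset.mem_insert_of_mem hQ)) hx hxy

lemma range_signVecAt_eq_of_isElimClosed {M : Finset A[X]} (hM : IsElimClosed M)
    (hcoeff : ∀ P ∈ M, ∀ i, sign (φ (P.coeff i)) = sign (ψ (P.coeff i))) :
    range (signVecAt φ M) = range (signVecAt ψ M) := by
  classical
  revert hM hcoeff
  refine Finset.induction_on_max_value Polynomial.degree M
    (fun _ _ => congrArg range (Subsingleton.elim _ _)) fun P S _ hmax ih hM hcoeff => ?_
  have hrange := ih (hM.of_insert hmax) fun Q hQ => hcoeff Q (Finset.mem_insert_of_mem hQ)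
  exact (range_signVecAt_insert_subset_of_isElimClosed hM hmax hcoeff hrange).antisymm
    (range_signVecAt_insert_subset_of_isElimClosed hM hmax (fun Q hQ i => (hcoeff Q hQ i).symm)
      hrange.symm)

lemma exists_finset_range_signVecAt_eq (L : Finset A[X]) : ∃ C : Finset A, ∀ φ ψ : A →+* ℝ,
    signVec C φ = signVec C ψ → range (signVecAt φ L) = range (signVecAt ψ L) := by
  classical
  obtain ⟨M, hLM, hM⟩ := exists_isElimClosed L
  refine ⟨M.biUnion Polynomial.coeffs, fun φ ψ h => ?_⟩
  have hcoeff : ∀ P ∈ M, ∀ i, sign (φ (P.coeff i)) = sign (ψ (P.coeff i)) := fun P hP i => by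
    by_cases hi : P.coeff i = 0
    · rw [hi, φ.map_zero, ψ.map_zero]
    · exact signVec_eq_iff.mp h _
        (Finset.mem_biUnion.mpr ⟨P, hP, Polynomial.coeff_mem_coeffs hi⟩)
  have hrestrict (χ : A →+* ℝ) : range (signVecAt χ L) =
      (fun v (P : L) => v ⟨P, hLM P.2⟩) '' range (signVecAt χ M) := by
    rw [← range_comp]
    rfl
  rw [hrestrict, hrestrict, range_signVecAt_eq_of_isElimClosed hM hcoeff]

lemma eval_map_finSuccEquiv {n : ℕ} (χ : A →+* ℝ) (t : ℝ) (y : Fin n → ℝ)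
    (P : MvPolynomial (Fin (n + 1)) A) :
    ((finSuccEquiv A n P).map (eval₂Hom χ y)).eval t = eval₂ χ (Fin.cons t y) P := by
  induction P using MvPolynomial.induction_on with
  | C a => simp [finSuccEquiv_apply]
  | add P Q hP hQ =>
    simp only [map_add, Polynomial.map_add, Polynomial.eval_add, hP, hQ, eval₂_add]
  | mul_X P i hP =>
    rw [map_mul, Polynomial.map_mul, Polynomial.eval_mul, hP, eval₂_mul, eval₂_X]
    congr 1
    cases i using Fin.cases <;> simp [finSuccEquiv_X_zero, finSuccEquiv_X_succ]

/-- **Tarski's quantifier elimination** over `ℝ`, in terms of realised sign conditions. -/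
theorem exists_finset_range_signVec_eval₂_eq {n : ℕ} (L : Finset (MvPolynomial (Fin n) A)) :
    ∃ C : Finset A, ∀ φ ψ : A →+* ℝ, signVec C φ = signVec C ψ →
      range (fun x => signVec L (eval₂ φ x)) = range (fun x => signVec L (eval₂ ψ x)) := by
  classical
  suffices h : ∃ C : Finset A, ∀ φ ψ : A →+* ℝ, signVec C φ = signVec C ψ →
      ∀ x : Fin n → ℝ, ∃ y : Fin n → ℝ, signVec L (eval₂ ψ y) = signVec L (eval₂ φ x) by
    obtain ⟨C, hC⟩ := h
    refine ⟨C, fun φ ψ hφψ => Subset.antisymm ?_ ?_⟩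
    · exact range_subset_iff.mpr (hC φ ψ hφψ)
    · exact range_subset_iff.mpr (hC ψ φ hφψ.symm)
  induction n with
  | zero =>
    refine ⟨L.image (coeff 0), fun φ ψ h x => ⟨x, signVec_eq_iff.mpr fun P hP => ?_⟩⟩
    obtain ⟨a, rfl⟩ := C_surjective (Fin 0) P
    have ha := signVec_eq_iff.mp h _ (Finset.mem_image_of_mem _ hP)
    rw [coeff_zero_C] at ha
    rw [eval₂_C, eval₂_C, ha]
  | succ n ih =>
    obtain ⟨C₁, hC₁⟩ := exists_finset_range_signVecAt_eq (L.image (finSuccEquiv A n))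
    obtain ⟨C, hC⟩ := ih C₁
    refine ⟨C, fun φ ψ h x => ?_⟩
    obtain ⟨y, hy⟩ := hC φ ψ h (Fin.tail x)
    obtain ⟨t, ht⟩ : signVecAt (eval₂Hom φ (Fin.tail x)) (L.image (finSuccEquiv A n)) (x 0) ∈
        range (signVecAt (eval₂Hom ψ y) (L.image (finSuccEquiv A n))) :=
      hC₁ (eval₂Hom φ (Fin.tail x)) (eval₂Hom ψ y) hy.symm ▸ mem_range_self _
    refine ⟨Fin.cons t y, signVec_eq_iff.mpr fun P hP => ?_⟩
    have hP' := signVec_eq_iff.mp ht _ (Finset.mem_image_of_mem _ hP)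
    rwa [eval_map_finSuccEquiv, eval_map_finSuccEquiv, Fin.cons_self_tail] at hP'

end Elimination

section Growth

lemma sign_add_eq_of_abs_lt {a b : ℝ} (h : |a| < |b|) : sign (a + b) = sign b := by
  rcases lt_or_gt_of_ne (abs_pos.mp ((abs_nonneg a).trans_lt h)) with hb | hb
  · rw [abs_of_neg hb] at h
    rw [sign_neg hb, sign_neg (by linarith [le_abs_self a])]
  · rw [abs_of_pos hb] at h
    rw [sign_pos hb, sign_pos (by linarith [neg_le_abs a])]

lemma abs_sum_mul_pow_lt {d : ℕ} {a : ℕ → ℝ} {b v w : ℝ} (hb : b ≠ 0) (hw : 1 ≤ w) (hv : v ≤ w)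
    (ha : ∀ i ∈ Finset.range d, |a i| ≤ 1 / (d + 1) * (|b| * v)) :
    |∑ i ∈ Finset.range d, a i * w ^ i| < |b| * w ^ d := by
  have hterm : ∀ i ∈ Finset.range d, |a i * w ^ i| ≤ 1 / (d + 1) * (|b| * w ^ d) := by
    intro i hi
    rw [abs_mul, abs_of_nonneg (by positivity : 0 ≤ w ^ i)]
    calc |a i| * w ^ i ≤ 1 / (d + 1) * (|b| * w) * w ^ i := by
          gcongr
          exact (ha i hi).trans (by gcongr)
      _ = 1 / (d + 1) * (|b| * w ^ (i + 1)) := by ring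
      _ ≤ 1 / (d + 1) * (|b| * w ^ d) := by
          gcongr
          exact Finset.mem_range.mp hi
  calc |∑ i ∈ Finset.range d, a i * w ^ i| ≤ ∑ i ∈ Finset.range d, |a i * w ^ i| :=
        Finset.abs_sum_le_sum_abs _ _
    _ ≤ d * (1 / (d + 1) * (|b| * w ^ d)) := by
        simpa using Finset.sum_le_card_nsmul _ _ _ hterm
    _ = d / (d + 1) * (|b| * w ^ d) := by ring
    _ < |b| * w ^ d :=
        mul_lt_of_lt_one_left (by positivity) ((div_lt_one (by positivity)).mpr (by linarith))

lemma eventually_sign_evalEval_eq (c : ℝ[X][X]) {N : ℕ} (hc : ∀ i, (c.coeff i).natDegree < N) :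
    ∀ᶠ u in atTop, ∀ w, u ^ N ≤ w → sign (c.evalEval u w) = sign (c.leadingCoeff.eval u) := by
  rcases eq_or_ne c 0 with rfl | hc0
  · simp
  have hlead : c.leadingCoeff ≠ 0 := Polynomial.leadingCoeff_ne_zero.mpr hc0
  have hcoeff : ∀ᶠ u : ℝ in atTop, ∀ i ∈ Finset.range c.natDegree,
      |(c.coeff i).eval u| ≤
        1 / (c.natDegree + 1) * |(c.leadingCoeff * Polynomial.X ^ N).eval u| := by
    refine (eventually_all_finset _).mpr fun i _ => Asymptotics.IsLittleO.bound
      (Polynomial.isLittleO_atTop_of_degree_lt _ _ (Polynomial.degree_lt_degree ?_))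
      (by positivity)
    rw [Polynomial.natDegree_mul_X_pow N hlead]
    exact (hc i).trans_le (Nat.le_add_left _ _)
  filter_upwards [hcoeff, eventually_ge_atTop 1, Polynomial.eventually_atTop_not_isRoot _ hlead]
    with u hu hu1 hroot w hw
  have hw1 : 1 ≤ w := (one_le_pow₀ hu1).trans hw
  have hexpand : c.evalEval u w =
      ∑ i ∈ Finset.range c.natDegree, (c.coeff i).eval u * w ^ i +
        c.leadingCoeff.eval u * w ^ c.natDegree := by
    rw [Polynomial.evalEval, Polynomial.eval_eq_sum_range (p := c), Finset.sum_range_succ]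
    simp [Polynomial.eval_finsetSum]
  have hlower : |∑ i ∈ Finset.range c.natDegree, (c.coeff i).eval u * w ^ i| <
      |c.leadingCoeff.eval u| * w ^ c.natDegree := by
    refine abs_sum_mul_pow_lt hroot hw1 hw fun i hi => ?_
    have hui := hu i hi
    rwa [Polynomial.eval_mul, Polynomial.eval_pow, Polynomial.eval_X, abs_mul,
      abs_of_nonneg (by positivity : 0 ≤ u ^ N)] at hui
  have hwd : 0 < w ^ c.natDegree := by positivity
  rw [← abs_of_pos hwd, ← abs_mul] at hlower
  rw [hexpand, sign_add_eq_of_abs_lt hlower, sign_mul, sign_pos hwd, mul_one]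

lemma exists_eventually_signVec_evalEval_eq (C : Finset ℝ[X][X]) :
    ∃ N : ℕ, ∀ᶠ u in atTop, ∀ w w', u ^ N ≤ w → u ^ N ≤ w' →
      signVec C (Polynomial.evalEval u w) = signVec C (Polynomial.evalEval u w') := by
  let N := C.sup (fun c => c.support.sup fun i => (c.coeff i).natDegree) + 1
  have hN : ∀ c ∈ C, ∀ i, (c.coeff i).natDegree < N := fun c hc i => by
    by_cases hi : c.coeff i = 0
    · rw [hi, Polynomial.natDegree_zero]
      exact Nat.succ_pos _
    · exact Nat.lt_succ_of_le ((Finset.le_sup (f := fun i => (c.coeff i).natDegree)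
        (Polynomial.mem_support_iff.mpr hi)).trans (Finset.le_sup
          (f := fun c : ℝ[X][X] => c.support.sup fun i => (c.coeff i).natDegree) hc))
  refine ⟨N, ?_⟩
  filter_upwards [(eventually_all_finset C).mpr fun c hc => eventually_sign_evalEval_eq c (hN c hc)]
    with u hu w w' hw hw'
  exact signVec_eq_iff.mpr fun c hc => (hu c hc w hw).trans (hu c hc w' hw').symm

theorem exists_eventually_range_signVec_eq {n : ℕ} (L : Finset (MvPolynomial (Fin n) ℝ[X][X])) :
    ∃ N : ℕ, ∀ᶠ u in atTop, ∀ w w', u ^ N ≤ w → u ^ N ≤ w' →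
      range (fun x => signVec L (eval₂ (Polynomial.evalEvalRingHom u w) x)) =
        range (fun x => signVec L (eval₂ (Polynomial.evalEvalRingHom u w') x)) := by
  obtain ⟨C, hC⟩ := exists_finset_range_signVec_eval₂_eq L
  obtain ⟨N, hN⟩ := exists_eventually_signVec_evalEval_eq C
  refine ⟨N, hN.mono fun u hu w w' hw hw' => hC _ _ ?_⟩
  simpa only [Polynomial.coe_evalEvalRingHom] using hu w w' hw hw'

end Growth

/-- `g` is given on `U` by a quotient of polynomials, in the sense that the denominator is not the
zero polynomial; it may vanish at points of `U`. -/
def IsRationalOn {n : ℕ} (U : Set (Fin n → ℝ)) (g : (Fin n → ℝ) → ℝ) : Prop :=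
  ∃ p q : MvPolynomial (Fin n) ℝ, q ≠ 0 ∧ ∀ x ∈ U, eval x q * g x = eval x p

section Lojasiewicz

variable {n : ℕ} {f g : (Fin n → ℝ) → ℝ} {p₁ q₁ p₂ q₂ : MvPolynomial (Fin n) ℝ}

lemma exists_eval_ne_zero_of_isOpen {q : MvPolynomial (Fin n) ℝ} (hq : q ≠ 0)
    {U : Set (Fin n → ℝ)} (hU : IsOpen U) (hne : U.Nonempty) : ∃ y ∈ U, eval y q ≠ 0 := by
  by_contra! hzero
  obtain ⟨a, ha⟩ := hne
  obtain ⟨ε, hε, hball⟩ := Metric.isOpen_iff.mp hU a ha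
  refine hq (MvPolynomial.funext_set (fun i => Metric.ball (a i) ε) (fun i => ?_) fun y hy => ?_)
  · rw [Real.ball_eq_Ioo]
    exact Ioo_infinite (by linarith)
  · rw [map_zero]
    exact hzero y (hball (ball_pi a hε ▸ hy))

lemma sq_sub_sq_pos_iff {q a w : ℝ} (hw : 0 ≤ w) :
    0 < (q * a) ^ 2 - (w * q) ^ 2 ↔ q ≠ 0 ∧ w < |a| := by
  rcases eq_or_ne q 0 with rfl | hq
  · simp
  · have hfactor : (q * a) ^ 2 - (w * q) ^ 2 = q ^ 2 * (|a| ^ 2 - w ^ 2) := by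
      rw [sq_abs]
      ring
    rw [hfactor, mul_pos_iff_of_pos_left (by positivity), sub_pos,
      sq_lt_sq₀ hw (abs_nonneg a), and_iff_right hq]

lemma ne_zero_of_one_le_abs_mul {u a : ℝ} (h : 1 ≤ |u * a|) : a ≠ 0 := by
  rintro rfl
  norm_num at h

lemma exists_abs_le_of_sum_sq_le (hf : Continuous f) (hg : ContinuousOn g {x | f x ≠ 0}) (u : ℝ) :
    ∃ B, ∀ y, ∑ i, y i ^ 2 ≤ u → 1 ≤ |u * f y| → |g y| ≤ B := by
  have hclosed : IsClosed ({y : Fin n → ℝ | ∑ i, y i ^ 2 ≤ u} ∩ {y | 1 ≤ |u * f y|}) :=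
    (isClosed_le (by fun_prop) continuous_const).inter
      (isClosed_le continuous_const (continuous_const.mul hf).abs)
  have hK : IsCompact ({y : Fin n → ℝ | ∑ i, y i ^ 2 ≤ u} ∩ {y | 1 ≤ |u * f y|}) := by
    refine Metric.isCompact_of_isClosed_isBounded hclosed
      ((Metric.isBounded_closedBall (x := 0) (r := √u)).subset fun y hy => ?_)
    rw [mem_closedBall_zero_iff, pi_norm_le_iff_of_nonneg (Real.sqrt_nonneg u)]
    exact fun i => Real.abs_le_sqrt ((Finset.single_le_sum (f := fun i => y i ^ 2)
      (fun j _ => sq_nonneg _) (Finset.mem_univ i)).trans hy.1)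
  obtain ⟨B, hB⟩ := hK.exists_bound_of_continuousOn
    (hg.mono fun y hy => ne_zero_of_one_le_abs_mul hy.2)
  exact ⟨B, fun y hyu hyf => hB y ⟨hyu, hyf⟩⟩

lemma eval₂_evalEval_map_C (u w : ℝ) (y : Fin n → ℝ) (p : MvPolynomial (Fin n) ℝ) :
    eval₂ (Polynomial.evalEvalRingHom u w) y
      (MvPolynomial.map (Polynomial.C.comp Polynomial.C) p) = eval y p := by
  have hid : (Polynomial.evalEvalRingHom u w).comp (Polynomial.C.comp Polynomial.C) =
      RingHom.id ℝ := Subsingleton.elim _ _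
  rw [eval₂_map, hid, eval₂_id]

/-- The points at which the growth of `g = p₂ / q₂` is compared with that of `1 / f`, for
`f = p₁ / q₁`: those of Euclidean norm below `√u`, with `1 / |f|` below `u` and `|g|` above `w`,
away from the zeros of the denominators. -/
def growthSet (f g : (Fin n → ℝ) → ℝ) (q₁ q₂ : MvPolynomial (Fin n) ℝ) (u w : ℝ) :
    Set (Fin n → ℝ) :=
  {y | ∑ i, y i ^ 2 < u ∧ (eval y q₁ ≠ 0 ∧ 1 < |u * f y|) ∧ (eval y q₂ ≠ 0 ∧ w < |g y|)}

-- Clearing denominators describes the growth set by polynomials with coefficients in `ℝ[u][w]`.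
lemma exists_finset_mem_growthSet_iff (hf : ∀ x, eval x q₁ * f x = eval x p₁)
    (hg : ∀ x, f x ≠ 0 → eval x q₂ * g x = eval x p₂) :
    ∃ L : Finset (MvPolynomial (Fin n) ℝ[X][X]), ∀ u w, 0 ≤ w → ∀ y,
      y ∈ growthSet f g q₁ q₂ u w ↔
        ∀ P ∈ L, sign (eval₂ (Polynomial.evalEvalRingHom u w) y P) = 1 := by
  classical
  let ι : MvPolynomial (Fin n) ℝ →+* MvPolynomial (Fin n) ℝ[X][X] :=
    MvPolynomial.map (Polynomial.C.comp Polynomial.C)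
  let U : MvPolynomial (Fin n) ℝ[X][X] := C (Polynomial.C Polynomial.X)
  let W : MvPolynomial (Fin n) ℝ[X][X] := C Polynomial.X
  refine ⟨{U - ∑ i, X i ^ 2, (U * ι p₁) ^ 2 - ι q₁ ^ 2, ι p₂ ^ 2 - (W * ι q₂) ^ 2},
    fun u w hw y => ?_⟩
  have hι (p) : eval₂ (Polynomial.evalEvalRingHom u w) y (ι p) = eval y p :=
    eval₂_evalEval_map_C u w y p
  have hf' : (u * eval y p₁) ^ 2 - eval y q₁ ^ 2 =
      (eval y q₁ * (u * f y)) ^ 2 - (1 * eval y q₁) ^ 2 := by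
    rw [← hf]
    ring
  simp only [Finset.forall_mem_insert, Finset.mem_singleton, forall_eq, sign_eq_one_iff, U, W,
    eval₂_sub, eval₂_sum, eval₂_pow, eval₂_mul, eval₂_C, eval₂_X, hι,
    Polynomial.coe_evalEvalRingHom, Polynomial.evalEval_C, Polynomial.evalEval_X,
    Polynomial.eval_X, hf', sq_sub_sq_pos_iff zero_le_one]
  refine and_congr sub_pos.symm (and_congr_right fun hfy => ?_)
  rw [← hg y (ne_zero_of_one_le_abs_mul hfy.2.le), sq_sub_sq_pos_iff hw]

lemma exists_eventually_growthSet_nonempty (hf : ∀ x, eval x q₁ * f x = eval x p₁)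
    (hg : ∀ x, f x ≠ 0 → eval x q₂ * g x = eval x p₂) :
    ∃ N : ℕ, ∀ᶠ u in atTop, ∀ w w', u ^ N ≤ w → u ^ N ≤ w' →
      (growthSet f g q₁ q₂ u w).Nonempty → (growthSet f g q₁ q₂ u w').Nonempty := by
  obtain ⟨L, hL⟩ := exists_finset_mem_growthSet_iff hf hg
  obtain ⟨N, hN⟩ := exists_eventually_range_signVec_eq L
  refine ⟨N, ?_⟩
  filter_upwards [hN, eventually_ge_atTop 0] with u hu hu0 w w' hw hw' ⟨y, hy⟩
  have hpow : 0 ≤ u ^ N := by positivity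
  obtain ⟨z, hz⟩ : signVec L (eval₂ (Polynomial.evalEvalRingHom u w) y) ∈
      range (fun x => signVec L (eval₂ (Polynomial.evalEvalRingHom u w') x)) :=
    hu w w' hw hw' ▸ mem_range_self y
  exact ⟨z, (hL u w' (hpow.trans hw') z).mpr fun P hP =>
    (signVec_eq_iff.mp hz P hP).trans ((hL u w (hpow.trans hw) y).mp hy P hP)⟩

lemma exists_mem_growthSet (hf : Continuous f) (hg : ContinuousOn g {x | f x ≠ 0})
    (hq₁ : q₁ ≠ 0) (hq₂ : q₂ ≠ 0) {u w : ℝ} {y : Fin n → ℝ} (hyu : ∑ i, y i ^ 2 < u)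
    (hyf : 1 < |u * f y|) (hyg : w < |g y|) : (growthSet f g q₁ q₂ u w).Nonempty := by
  have hopen : IsOpen ({y | ∑ i, y i ^ 2 < u} ∩
      ({y | 1 < |u * f y|} ∩ ({x | f x ≠ 0} ∩ {y | w < |g y|}))) :=
    (isOpen_lt (by fun_prop) continuous_const).inter
      ((isOpen_lt continuous_const (continuous_const.mul hf).abs).inter
        (hg.abs.isOpen_inter_preimage (isOpen_ne_fun hf continuous_const) isOpen_Ioi))
  obtain ⟨z, ⟨hzu, hzf, -, hzg⟩, hz⟩ := exists_eval_ne_zero_of_isOpen (mul_ne_zero hq₁ hq₂) hopen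
    ⟨y, hyu, hyf, ne_zero_of_one_le_abs_mul hyf.le, hyg⟩
  rw [map_mul] at hz
  exact ⟨z, hzu, ⟨left_ne_zero_of_mul hz, hzf⟩, right_ne_zero_of_mul hz, hzg⟩

lemma exists_eventually_abs_le_pow (hf : Continuous f) (hg : ContinuousOn g {x | f x ≠ 0})
    (hfr : IsRationalOn univ f) (hgr : IsRationalOn {x | f x ≠ 0} g) :
    ∃ N : ℕ, ∀ᶠ u in atTop, ∀ y, ∑ i, y i ^ 2 < u → 1 < |u * f y| → |g y| ≤ u ^ N := by
  obtain ⟨p₁, q₁, hq₁, hf₁⟩ := hfr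
  obtain ⟨p₂, q₂, hq₂, hg₂⟩ := hgr
  obtain ⟨N, hN⟩ := exists_eventually_growthSet_nonempty (fun x => hf₁ x (mem_univ x)) hg₂
  refine ⟨N, hN.mono fun u hu y hyu hyf => ?_⟩
  by_contra! hyg
  obtain ⟨B, hB⟩ := exists_abs_le_of_sum_sq_le hf hg u
  obtain ⟨z, hzu, ⟨-, hzf⟩, -, hzg⟩ := hu (u ^ N) (max (u ^ N) B) le_rfl (le_max_left _ _)
    (exists_mem_growthSet hf hg hq₁ hq₂ hyu hyf hyg)
  exact ((hB z hzu.le hzf.le).trans (le_max_right _ _)).not_gt hzg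

lemma exists_pow_mul_isBigO_one (hf : Continuous f) (hg : ContinuousOn g {x | f x ≠ 0})
    (hfr : IsRationalOn univ f) (hgr : IsRationalOn {x | f x ≠ 0} g) :
    ∃ N : ℕ, ∀ x, f x = 0 → (fun y => f y ^ N * g y) =O[𝓝 x] (fun _ => (1 : ℝ)) := by
  obtain ⟨N, hN⟩ := exists_eventually_abs_le_pow hf hg hfr hgr
  obtain ⟨u₀, hu₀⟩ := eventually_atTop.mp hN
  refine ⟨N + 1, fun x hx => Asymptotics.IsBigO.of_bound (2 ^ N) ?_⟩
  have hlim : Tendsto (fun y => (∑ i, y i ^ 2 + |u₀| + 1) * |f y|) (𝓝 x) (𝓝 0) := by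
    have hcont : Continuous fun y => (∑ i, y i ^ 2 + |u₀| + 1) * |f y| := by fun_prop
    simpa [hx] using hcont.tendsto x
  filter_upwards [hlim.eventually_lt_const one_pos] with y hy
  rw [norm_one, mul_one, Real.norm_eq_abs, abs_mul, abs_pow]
  rcases (abs_nonneg (f y)).eq_or_lt with hfy | hfy
  · rw [← hfy, zero_pow N.succ_ne_zero, zero_mul]
    positivity
  have hsum : 0 ≤ ∑ i, y i ^ 2 := Finset.sum_nonneg fun i _ => sq_nonneg _
  have hle : ∑ i, y i ^ 2 + |u₀| + 1 < 2 / |f y| := by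
    rw [lt_div_iff₀ hfy]
    linarith
  have hfy1 : |f y| ≤ 1 := by nlinarith [abs_nonneg u₀]
  have hbound : |g y| ≤ (2 / |f y|) ^ N := by
    refine hu₀ _ (by linarith [le_abs_self u₀]) y (by linarith [abs_nonneg u₀]) ?_
    rw [abs_mul, abs_of_pos (by positivity), div_mul_cancel₀ _ hfy.ne']
    exact one_lt_two
  calc |f y| ^ (N + 1) * |g y| ≤ |f y| ^ N * (2 / |f y|) ^ N := by
        gcongr ?_ * ?_
        exact pow_le_pow_of_le_one hfy.le hfy1 N.le_succ
    _ = 2 ^ N := by rw [← mul_pow, mul_div_cancel₀ _ hfy.ne']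

end Lojasiewicz

section PowMul

variable {E : Type*} [NormedAddCommGroup E] {f g : E → ℝ} {N m : ℕ}

lemma isBigO_pow_mul {x : E} (hf : ContinuousAt f x)
    (hN : (fun y => f y ^ N * g y) =O[𝓝 x] (fun _ => (1 : ℝ))) {j : ℕ} (hm : N + j ≤ m) :
    (fun y => f y ^ m * g y) =O[𝓝 x] fun y => f y ^ j := by
  obtain ⟨i, rfl⟩ := Nat.exists_eq_add_of_le hm
  have hpow : (fun y => f y ^ i) =O[𝓝 x] (fun _ => (1 : ℝ)) := (hf.pow i).isBigO_one ℝ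
  refine ((hN.mul hpow).mul (Asymptotics.isBigO_refl (fun y => f y ^ j) _)).congr ?_ ?_
  · intro y
    ring
  · intro y
    rw [one_mul, one_mul]

lemma continuous_pow_mul (hf : Continuous f) (hg : ContinuousOn g {x | f x ≠ 0})
    (hN : ∀ x, f x = 0 → (fun y => f y ^ N * g y) =O[𝓝 x] (fun _ => (1 : ℝ)))
    (hm : N + 1 ≤ m) : Continuous fun x => f x ^ m * g x := by
  refine continuous_iff_continuousAt.mpr fun x => ?_
  by_cases hx : f x = 0
  · have hlim : Tendsto (fun y => f y ^ 1) (𝓝 x) (𝓝 0) := by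
      simpa [hx] using hf.tendsto x
    have hval : f x ^ m * g x = 0 := by rw [hx, zero_pow (by lia), zero_mul]
    rw [ContinuousAt, hval]
    exact (isBigO_pow_mul hf.continuousAt (hN x hx) hm).trans_tendsto hlim
  · exact (hf.continuousAt.pow m).mul
      (hg.continuousAt ((isOpen_ne_fun hf continuous_const).mem_nhds hx))

lemma hasFDerivAt_pow_mul [NormedSpace ℝ E] (hf : Differentiable ℝ f)
    (hg : DifferentiableOn ℝ g {x | f x ≠ 0})
    (hN : ∀ x, f x = 0 → (fun y => f y ^ N * g y) =O[𝓝 x] (fun _ => (1 : ℝ)))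
    (hm : N + 2 ≤ m) (x : E) :
    HasFDerivAt (fun y => f y ^ m * g y)
      (f x ^ m • fderiv ℝ g x + (m * (f x ^ (m - 1) * g x)) • fderiv ℝ f x) x := by
  by_cases hx : f x = 0
  · have hderiv : f x ^ m • fderiv ℝ g x + (m * (f x ^ (m - 1) * g x)) • fderiv ℝ f x = 0 := by
      rw [hx, zero_pow (by lia), zero_pow (by lia), zero_mul, mul_zero, zero_smul, zero_smul,
        add_zero]
    have hfO : f =O[𝓝 x] fun y => ‖y - x‖ := by
      simpa [hx] using (hf x).hasFDerivAt.isBigO_sub.norm_right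
    rw [hderiv]
    exact ((isBigO_pow_mul (hf x).continuousAt (hN x hx) hm).trans (hfO.pow 2)).hasFDerivAt
      one_lt_two
  · have hgx := hg.differentiableAt ((isOpen_ne_fun hf.continuous continuous_const).mem_nhds hx)
    refine (((hf x).hasFDerivAt.pow m).mul hgx.hasFDerivAt).congr_fderiv ?_
    ext v
    simp
    ring

end PowMul

section Derivatives

variable {n : ℕ}

lemma hasFDerivAt_eval (p : MvPolynomial (Fin n) ℝ) (x : Fin n → ℝ) :
    HasFDerivAt (fun y => eval y p)
      (∑ i, eval x (pderiv i p) • ContinuousLinearMap.proj (R := ℝ) (φ := fun _ => ℝ) i) x := by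
  induction p using MvPolynomial.induction_on with
  | C a => simpa using hasFDerivAt_const a x
  | add p q hp hq =>
    simp only [eval_add]
    refine (hp.fun_add hq).congr_fderiv ?_
    simp only [map_add, add_smul, Finset.sum_add_distrib]
  | mul_X p i hp =>
    have hX : HasFDerivAt (fun y : Fin n → ℝ => y i) (ContinuousLinearMap.proj i) x :=
      hasFDerivAt_apply (𝕜 := ℝ) (F' := fun _ => ℝ) i x
    simp only [eval_mul, eval_X]
    refine (hp.fun_mul hX).congr_fderiv ?_
    ext v
    simp [pderiv_X, Pi.single_apply, apply_ite, ite_mul, add_mul, mul_assoc,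
      Finset.sum_add_distrib, Finset.mul_sum]

lemma IsRationalOn.fderiv_apply {U : Set (Fin n → ℝ)} (hU : IsOpen U) {g : (Fin n → ℝ) → ℝ}
    (hg : IsRationalOn U g) (hdiff : DifferentiableOn ℝ g U) (v : Fin n → ℝ) :
    IsRationalOn U fun x => fderiv ℝ g x v := by
  obtain ⟨p, q, hq, hpq⟩ := hg
  let D (p : MvPolynomial (Fin n) ℝ) : MvPolynomial (Fin n) ℝ := ∑ i, C (v i) * pderiv i p
  refine ⟨q * D p - D q * p, q * q, mul_ne_zero hq hq, fun x hx => ?_⟩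
  have hD (p : MvPolynomial (Fin n) ℝ) : fderiv ℝ (fun y => eval y p) x v = eval x (D p) := by
    simp [(hasFDerivAt_eval p x).fderiv, D, mul_comm]
  have hleibniz : eval x q * fderiv ℝ g x v + g x * eval x (D q) = eval x (D p) := by
    have hprod := ((hasFDerivAt_eval q x).fun_mul
      (hdiff.differentiableAt (hU.mem_nhds hx)).hasFDerivAt).fderiv
    have heq : (fun y => eval y q * g y) =ᶠ[𝓝 x] fun y => eval y p := by
      filter_upwards [hU.mem_nhds hx] with y hy using hpq y hy
    rw [← hD, ← hD, ← heq.fderiv_eq, hprod, (hasFDerivAt_eval q x).fderiv]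
    rfl
  simp only [map_mul, map_sub]
  linear_combination eval x q * hleibniz - eval x (D q) * hpq x hx

lemma contDiff_of_contDiff_apply_single {E : Type*} [NormedAddCommGroup E] [NormedSpace ℝ E]
    {k : WithTop ℕ∞} {F : E → (Fin n → ℝ) →L[ℝ] ℝ}
    (hF : ∀ i, ContDiff ℝ k fun x => F x (Pi.single i 1)) : ContDiff ℝ k F := by
  refine contDiff_clm_apply_iff.mpr fun v => ?_
  have hv (x : E) : F x v = ∑ i, v i * F x (Pi.single i 1) := by
    conv_lhs => rw [pi_eq_sum_univ' v]
    simp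
  simp only [hv]
  exact ContDiff.sum fun i _ => contDiff_const.mul (hF i)

end Derivatives

section Extension

variable {n k : ℕ} {f g : (Fin n → ℝ) → ℝ}

theorem exists_forall_contDiff_pow_mul (hf : ContDiff ℝ k f)
    (hg : ContDiffOn ℝ k g {x | f x ≠ 0}) (hfr : IsRationalOn univ f)
    (hgr : IsRationalOn {x | f x ≠ 0} g) :
    ∃ N : ℕ, ∀ m ≥ N, ContDiff ℝ k fun x => f x ^ m * g x := by
  induction k generalizing g with
  | zero =>
    obtain ⟨N, hN⟩ := exists_pow_mul_isBigO_one hf.continuous hg.continuousOn hfr hgr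
    exact ⟨N + 1, fun m hm =>
      contDiff_zero.mpr (continuous_pow_mul hf.continuous hg.continuousOn hN hm)⟩
  | succ k ih =>
    have hopen : IsOpen {x | f x ≠ 0} := isOpen_ne_fun hf.continuous continuous_const
    have hfk : ContDiff ℝ k f := hf.of_le (by exact_mod_cast k.le_succ)
    have hgk : ContDiffOn ℝ k g {x | f x ≠ 0} := hg.of_le (by exact_mod_cast k.le_succ)
    push_cast at hf hg ⊢
    obtain ⟨hfd, -, hf'⟩ := contDiff_succ_iff_fderiv.mp hf
    obtain ⟨hgd, -, hg'⟩ := (contDiffOn_succ_iff_fderiv_of_isOpen hopen).mp hg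
    obtain ⟨N, hN⟩ := exists_pow_mul_isBigO_one hf.continuous hg.continuousOn hfr hgr
    obtain ⟨N₀, hN₀⟩ := ih hfk hgk hgr
    have hpartial (i : Fin n) : ∃ N : ℕ, ∀ m ≥ N,
        ContDiff ℝ k fun x => f x ^ m * fderiv ℝ g x (Pi.single i 1) :=
      ih hfk (hg'.clm_apply contDiffOn_const) (hgr.fderiv_apply hopen hgd _)
    choose M hM using hpartial
    refine ⟨N + N₀ + ∑ i, M i + 2, fun m hm => ?_⟩
    have hderiv := hasFDerivAt_pow_mul hfd hgd hN (m := m) (by lia)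
    refine contDiff_succ_iff_fderiv.mpr ⟨fun x => (hderiv x).differentiableAt, by simp, ?_⟩
    rw [funext fun x => (hderiv x).fderiv]
    refine ContDiff.add (contDiff_of_contDiff_apply_single fun i => hM i m ?_)
      ((contDiff_const.mul (hN₀ (m - 1) (by lia))).smul hf')
    have hle := Finset.single_le_sum (f := M) (fun _ _ => Nat.zero_le _) (Finset.mem_univ i)
    lia

end Extension

section Regulous

variable {n k : ℕ} {U : Set (Fin n → ℝ)} {f g : (Fin n → ℝ) → ℝ}

lemma IsRationalOn.inv (hU : IsOpen U) (hf : IsRationalOn U f) (hf0 : ∀ x ∈ U, f x ≠ 0) :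
    IsRationalOn U fun x => (f x)⁻¹ := by
  obtain ⟨p, q, hq, hpq⟩ := hf
  rcases U.eq_empty_or_nonempty with rfl | hne
  · exact ⟨0, 1, one_ne_zero, fun x hx => hx.elim⟩
  refine ⟨q, p, ?_, fun x hx => ?_⟩
  · rintro rfl
    obtain ⟨y, hyU, hy⟩ := exists_eval_ne_zero_of_isOpen hq hU hne
    exact mul_ne_zero hy (hf0 y hyU) ((hpq y hyU).trans (map_zero _))
  · rw [← hpq x hx, mul_inv_cancel_right₀ (hf0 x hx)]

lemma IsRationalOn.pow_mul (hf : IsRationalOn univ f) (hg : IsRationalOn {x | f x ≠ 0} g) {m : ℕ}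
    (hm : m ≠ 0) : IsRationalOn univ fun x => f x ^ m * g x := by
  obtain ⟨p₁, q₁, hq₁, h₁⟩ := hf
  obtain ⟨p₂, q₂, hq₂, h₂⟩ := hg
  refine ⟨p₁ ^ m * p₂, q₁ ^ m * q₂, mul_ne_zero (pow_ne_zero m hq₁) hq₂, fun x hx => ?_⟩
  beta_reduce
  rw [map_mul, map_mul, map_pow, map_pow, ← h₁ x hx, mul_pow]
  by_cases hfx : f x = 0
  · rw [hfx, zero_pow hm, zero_mul, mul_zero, mul_zero, zero_mul]
  · rw [← h₂ x hfx]
    ring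

lemma isRegulous_iff : IsRegulous n k f ↔ ContDiff ℝ k f ∧ IsRationalOn univ f := by
  simp only [IsRegulous, IsRationalOn, mem_univ, forall_const]

lemma isRegulousOn_iff {g : U → ℝ} : IsRegulousOn n k U g ↔
    ContDiffOn ℝ k (Function.extend Subtype.val g 0) U ∧
      IsRationalOn U (Function.extend Subtype.val g 0) := by
  refine and_congr_right fun _ => exists₂_congr fun p q => and_congr_right fun _ => ?_
  rw [Subtype.forall]
  exact forall₂_congr fun x hx => by
    rw [Subtype.val_injective.extend_apply g 0 ⟨x, hx⟩]

lemma isRegulousOn_domRestrict (hg : ContDiffOn ℝ k g U) (hgr : IsRationalOn U g) :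
    IsRegulousOn n k U (U.domRestrict g) := by
  obtain ⟨p, q, hq, hpq⟩ := hgr
  refine ⟨hg.congr fun x hx => ?_, p, q, hq, fun x => hpq x x.2⟩
  exact Subtype.val_injective.extend_apply (U.domRestrict g) 0 ⟨x, hx⟩

lemma IsRegulous.isRegulousOn_inv (hf : IsRegulous n k f) :
    IsRegulousOn n k {x | f x ≠ 0} ({x | f x ≠ 0}.domRestrict fun x => (f x)⁻¹) := by
  obtain ⟨hfk, p, q, hq, hpq⟩ := isRegulous_iff.mp hf
  exact isRegulousOn_domRestrict (hfk.contDiffOn.inv fun x hx => hx)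
    (IsRationalOn.inv (isOpen_ne_fun hfk.continuous continuous_const)
      ⟨p, q, hq, fun x _ => hpq x (mem_univ x)⟩ fun x hx => hx)

lemma IsRegulous.exists_mul_pow_eq (hf : IsRegulous n k f) {g : {x | f x ≠ 0} → ℝ}
    (hg : IsRegulousOn n k {x | f x ≠ 0} g) :
    ∃ (G : (Fin n → ℝ) → ℝ) (N : ℕ), IsRegulous n k G ∧
      ∀ x : {x | f x ≠ 0}, g x * f x ^ N = G x := by
  obtain ⟨hfk, hfr⟩ := isRegulous_iff.mp hf
  obtain ⟨hgk, hgr⟩ := isRegulousOn_iff.mp hg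
  obtain ⟨N, hN⟩ := exists_forall_contDiff_pow_mul hfk hgk hfr hgr
  refine ⟨_, N + 1, isRegulous_iff.mpr ⟨hN (N + 1) N.le_succ, hfr.pow_mul hgr N.succ_ne_zero⟩,
    fun x => ?_⟩
  rw [Subtype.val_injective.extend_apply, mul_comm]

lemma forall_ne_zero_eq_zero_iff {α R : Type*} [MulZeroClass R] [NoZeroDivisors R] {f g : α → R} :
    (∀ x : {x | f x ≠ 0}, g x = 0) ↔ f * g = 0 := by
  simp only [funext_iff, Subtype.forall, mem_ofPred_eq, Pi.mul_apply, Pi.zero_apply,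
    mul_eq_zero, or_iff_not_imp_left, ne_eq]

end Regulous

end

/-- **Regulous functions, Proposition `restriction`**: for a `k`-regulous function `f` on
`ℝⁿ` and `U = D(f) = {x | f x ≠ 0}`, the restriction map `ρ` identifies `R^k(U)` with the
localization `R^k(ℝⁿ)_f`: the restriction `ρ f` is invertible in `R^k(U)`; every
`k`-regulous function on `U` is of the form `ρ(G) · ρ(f)^{-N}`; and `ρ(g) = 0` iff
`f·g = 0` in `R^k(ℝⁿ)`. -/
theorem regulous_localization (n k : ℕ) (f : regulousRing n k)
    (U : Set (Fin n → ℝ)) (hU : U = {x : Fin n → ℝ | (f : (Fin n → ℝ) → ℝ) x ≠ 0}) :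
    -- the restriction of `f` to `U` is a unit of `R^k(U)`
    (∃ h : U → ℝ, IsRegulousOn n k U h ∧
      ∀ x : U, (f : (Fin n → ℝ) → ℝ) (x : Fin n → ℝ) * h x = 1) ∧
    -- every element of `R^k(U)` is `ρ(G) · ρ(f)^{-N}`, i.e. `g · (ρ f)^N = ρ G` on `U`
    (∀ g : U → ℝ, IsRegulousOn n k U g →
      ∃ (G : regulousRing n k) (N : ℕ),
        ∀ x : U, g x * ((f : (Fin n → ℝ) → ℝ) (x : Fin n → ℝ)) ^ N =
          (G : (Fin n → ℝ) → ℝ) (x : Fin n → ℝ)) ∧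
    -- the kernel of the restriction map is the annihilator of `f`
    (∀ g : regulousRing n k,
      (∀ x : U, (g : (Fin n → ℝ) → ℝ) (x : Fin n → ℝ) = 0) ↔ f * g = 0) := by
  subst hU
  have hf : IsRegulous n k f := f.2
  refine ⟨⟨_, hf.isRegulousOn_inv, fun x => mul_inv_cancel₀ x.2⟩, fun g hg => ?_, fun g => ?_⟩
  · obtain ⟨G, N, hG, hgG⟩ := hf.exists_mul_pow_eq hg
    exact ⟨⟨G, hG⟩, N, hgG⟩
  · rw [forall_ne_zero_eq_zero_iff, ← Subring.coe_mul, ZeroMemClass.coe_eq_zero]
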